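/- arXiv:2203.10293 — 4 statements merged into one kernel-verified Lean document; each statement's English description precedes it below -/
import Mathlib

section
/- Let n ≥ 1, let X ⊆ ℕ, let p, q ∈ [2n]^n, let x, y ∈ [X]^n with x →_{pq} y, and let i, j < n. Then x_[i] = y_[j] if and only if i ∈ dom φ_{pq} and φ_{pq}(i) = j. -/
/-! Common definitions. -/

/-- The `i`-th smallest element of a finite set of naturals (default 0 if `i ≥ |s|`). -/
def nth (s : Finset ℕ) (i : ℕ) : ℕ := (s.sort (· ≤ ·)).getD i 0

/-- `[ω]^n` : the set of `n`-element subsets of `ℕ` (as `Finset`s). -/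
def cube (n : ℕ) : Set (Finset ℕ) := {s | s.card = n}

/-- `P` is a partition of `Z` (one member may be empty). -/
def IsPartitionOn (Z : Set (Finset ℕ)) (P : Set (Set (Finset ℕ))) : Prop :=
  ⋃₀ P = Z ∧ ∀ A ∈ P, ∀ B ∈ P, A ∩ B = ∅ ∨ A = B

/-- The equivalence relation `≈_P` induced by a partition `P`. -/
def EquivP (P : Set (Set (Finset ℕ))) (p q : Finset ℕ) : Prop := ∃ A ∈ P, p ∈ A ∧ q ∈ A

/-- `X` is `I`-canonical for a partition `P` of `[ω]^n`. -/
def ICanon (n : ℕ) (P : Set (Set (Finset ℕ))) (I : Set ℕ) (X : Set ℕ) : Prop :=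
  ∀ p q : Finset ℕ, ↑p ⊆ X → p.card = n → ↑q ⊆ X → q.card = n →
    (EquivP P p q ↔ ∀ i ∈ I, nth p i = nth q i)

/-- `X` is canonical for a partition `P` of `[ω]^n`. -/
def Canon (n : ℕ) (P : Set (Set (Finset ℕ))) (X : Set ℕ) : Prop :=
  ∃ I : Set ℕ, I ⊆ Set.Iio n ∧ ICanon n P I X

/-- `X` is homogeneous for a partition `P` of `[ω]^n`. -/
def Homog (n : ℕ) (P : Set (Set (Finset ℕ))) (X : Set ℕ) : Prop :=
  ∃ A ∈ P, ∀ s : Finset ℕ, ↑s ⊆ X → s.card = n → s ∈ A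

/-- `[2n]^n` : the `n`-element subsets of `{0, …, 2n-1}`. -/
def idx (n : ℕ) : Finset (Finset ℕ) := Finset.powersetCard n (Finset.range (2 * n))

/-- The set `Q_{pq} = { z ∈ [ω]^{2n} : {z_[i] : i ∈ p} ≈_P {z_[i] : i ∈ q} }`. -/
def Qpq (n : ℕ) (P : Set (Set (Finset ℕ))) (p q : Finset ℕ) : Set (Finset ℕ) :=
  {z | z.card = 2 * n ∧ EquivP P (p.image (nth z)) (q.image (nth z))}

/-- `P*` : the atoms of the field of subsets of `[ω]^{2n}` generated by the sets `Q_{pq}`. -/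
def Atoms (n : ℕ) (P : Set (Set (Finset ℕ))) : Set (Set (Finset ℕ)) :=
  {Q | Q.Nonempty ∧ ∃ S : Finset ℕ → Finset ℕ → Set (Finset ℕ),
    (∀ p ∈ idx n, ∀ q ∈ idx n, S p q = Qpq n P p q ∨ S p q = cube (2 * n) \ Qpq n P p q) ∧
    Q = ⋂ p ∈ idx n, ⋂ q ∈ idx n, S p q}

/-- `I_{pq} = { i < n : p_[i] = q_[i] }`. -/
def Ipq (n : ℕ) (p q : Finset ℕ) : Set ℕ := {i | i < n ∧ nth p i = nth q i}

/-- `I(Q) = ⋂ { I_{pq} : p, q ∈ [2n]^n, Q ⊆ Q_{pq} }`. -/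
def IofQ (n : ℕ) (P : Set (Set (Finset ℕ))) (Q : Set (Finset ℕ)) : Set ℕ :=
  ⋂ p ∈ idx n, ⋂ q ∈ idx n, ⋂ (_ : Q ⊆ Qpq n P p q), Ipq n p q

/-- `ρ(a,b) = |(a △ b) ∩ X|`, identifying `a` with `{0, …, a-1}`. -/
noncomputable def rho (X : Set ℕ) (a b : ℕ) : ℕ := (X ∩ Set.Ico (min a b) (max a b)).ncard

/-- The sparsity `d(x) = min { ρ(a,b) : a, b ∈ x ∪ {e}, a ≠ b }` (with `d(∅) = ⊤ = ω`). -/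
noncomputable def sparsity (X : Set ℕ) (e : ℕ) (x : Finset ℕ) : ℕ∞ :=
  ⨅ a ∈ (x ∪ {e} : Finset ℕ), ⨅ b ∈ (x ∪ {e} : Finset ℕ), ⨅ _ : a ≠ b, (rho X a b : ℕ∞)

/-- `r(x,y) = max_{b ∈ y} min { ρ(a,b) : a ∈ x ∪ {e}, a ≤ b }`. -/
noncomputable def rfun (X : Set ℕ) (e : ℕ) (x y : Finset ℕ) : ℕ :=
  y.sup fun b => sInf ((fun a => rho X a b) '' {a : ℕ | a ∈ (x ∪ {e} : Finset ℕ) ∧ a ≤ b})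

/-- `x →_{pq} y` : there is `z ∈ [X]^{2n}` with `{z_[i] : i ∈ p} = x` and `{z_[i] : i ∈ q} = y`. -/
def Arrow (X : Set ℕ) (n : ℕ) (p q x y : Finset ℕ) : Prop :=
  ∃ z : Finset ℕ, ↑z ⊆ X ∧ z.card = 2 * n ∧ p.image (nth z) = x ∧ q.image (nth z) = y

/-- `x ↔_Q y` : `x →_{pq} y` for some `p, q ∈ [2n]^n` with `Q ⊆ Q_{pq}`. -/
def RelQ (n : ℕ) (P : Set (Set (Finset ℕ))) (Q : Set (Finset ℕ)) (X : Set ℕ)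
    (x y : Finset ℕ) : Prop :=
  ∃ p ∈ idx n, ∃ q ∈ idx n, Q ⊆ Qpq n P p q ∧ Arrow X n p q x y

/-- `x_0, …, x_l` is a `t`-cascade. -/
def IsCascade (n : ℕ) (P : Set (Set (Finset ℕ))) (Q : Set (Finset ℕ)) (X : Set ℕ) (e : ℕ)
    (t l : ℕ) (x : ℕ → Finset ℕ) : Prop :=
  (∀ i ≤ l, ↑(x i) ⊆ X \ {e} ∧ (x i).card = n) ∧
  ∀ i < l, ((n ^ (t - 2 * i) : ℕ) : ℕ∞) ≤ sparsity X e (x i) ∧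
    rfun X e (x i) (x (i + 1)) ≤ n ^ (t - 2 * i - 1) ∧
    RelQ n P Q X (x i) (x (i + 1))

/-- The `n`-fold Fubini power `u ⊗ ⋯ ⊗ u` of an ultrafilter on `ℕ`, as an
ultrafilter on `Fin n → ℕ`. -/
noncomputable def tensorPow (u : Ultrafilter ℕ) : (n : ℕ) → Ultrafilter (Fin n → ℕ)
  | 0 => pure (fun i => i.elim0)
  | n + 1 => u.bind fun a => (tensorPow u n).map (Fin.cons a)

/-- The diagonal ultrafilter extension `f̃(u, u, …, u)` of `f : ℕ^n → ℕ`. -/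
noncomputable def diagExt {n : ℕ} (f : (Fin n → ℕ) → ℕ) (u : Ultrafilter ℕ) : Ultrafilter ℕ :=
  (tensorPow u n).map f

/-- The Rudin–Keisler preorder. -/
def RKle (u v : Ultrafilter ℕ) : Prop := ∃ h : ℕ → ℕ, v.map h = u

/-- Rudin–Keisler equivalence. -/
def RKeq (u v : Ultrafilter ℕ) : Prop := RKle u v ∧ RKle v u

/-- `u` is nonprincipal: it contains no finite set. -/
def Nonprincipal (u : Ultrafilter ℕ) : Prop := ∀ S : Set ℕ, S.Finite → S ∉ u

/-- `u` is a Ramsey ultrafilter. -/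
def IsRamseyU (u : Ultrafilter ℕ) : Prop :=
  Nonprincipal u ∧ ∀ n : ℕ, 1 ≤ n → ∀ P : Set (Set (Finset ℕ)),
    IsPartitionOn (cube n) P → P.Finite → ∃ X ∈ u, Homog n P X

/-- `f : ℕ^n → ℕ` is selectively upward injective on `X` w.r.t. the index set `I`
(`I = ∅` gives "upward constant"). -/
def SelUpInjWrt (n : ℕ) (f : (Fin n → ℕ) → ℕ) (X : Set ℕ) (I : Set (Fin n)) : Prop :=
  ∀ x y : Fin n → ℕ, (∀ i, x i ∈ X) → (∀ i, y i ∈ X) → StrictMono x → StrictMono y →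
    (f x = f y ↔ ∀ i ∈ I, x i = y i)

/-! The map `i ↦ z_[i]` is strictly increasing, so it carries the `i`-th element of `p` to the
`i`-th element of its image `x`, and likewise for `q` and `y`. Being injective, it reduces
`x_[i] = y_[j]` to `p_[i] = q_[j]`, which says that `p_[i]` lies in `q` and has exactly `j`
elements of `q` below it. -/

open Finset

section nth

variable {s : Finset ℕ} {i : ℕ}

-- Both functions take the value `0` beyond the last element of `s`.
lemma nth_eq_natNth (s : Finset ℕ) : nth s = Nat.nth (· ∈ s) := by
  funext i
  rw [Nat.nth_eq_getD_sort (p := (· ∈ s)) s.finite_toSet, finite_toSet_toFinset, nth]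

lemma card_filter_lt_eq_count (s : Finset ℕ) (a : ℕ) : #{b ∈ s | b < a} = Nat.count (· ∈ s) a := by
  rw [Nat.count_eq_card_filter_range]
  congr 1
  ext b
  simp only [mem_filter, mem_range, and_comm]

lemma nth_mem (hi : i < #s) : nth s i ∈ s := by
  rw [nth_eq_natNth]
  exact Nat.nth_mem_of_lt_card s.finite_toSet (by rwa [finite_toSet_toFinset])

lemma strictMonoOn_nth (s : Finset ℕ) : StrictMonoOn (nth s) (Set.Iio #s) := by
  rw [nth_eq_natNth]
  simpa only [finite_toSet_toFinset] using Nat.nth_strictMonoOn (p := (· ∈ s)) s.finite_toSet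

lemma card_filter_lt_nth (hi : i < #s) : #{a ∈ s | a < nth s i} = i := by
  rw [card_filter_lt_eq_count, nth_eq_natNth]
  exact Nat.count_nth_of_lt_card_finite s.finite_toSet (by rwa [finite_toSet_toFinset])

lemma nth_card_filter_lt {a : ℕ} (ha : a ∈ s) : nth s #{b ∈ s | b < a} = a := by
  rw [card_filter_lt_eq_count, nth_eq_natNth, Nat.nth_count ha]

lemma eq_nth_iff {a : ℕ} (hi : i < #s) : a = nth s i ↔ a ∈ s ∧ #{b ∈ s | b < a} = i := by
  constructor
  · rintro rfl
    exact ⟨nth_mem hi, card_filter_lt_nth hi⟩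
  · rintro ⟨ha, rfl⟩
    exact (nth_card_filter_lt ha).symm

end nth

lemma card_filter_image_lt {α β : Type*} [LinearOrder α] [LinearOrder β] {s : Finset α}
    {f : α → β} (hf : StrictMonoOn f s) {a : α} (ha : a ∈ s) :
    #{b ∈ s.image f | b < f a} = #{b ∈ s | b < a} := by
  have filter_eq : {b ∈ s | f b < f a} = {b ∈ s | b < a} :=
    filter_congr fun b hb ↦ hf.lt_iff_lt hb ha
  rw [filter_image, filter_eq, card_image_of_injOn (hf.injOn.mono (filter_subset _ s))]

lemma nth_image {s : Finset ℕ} {f : ℕ → ℕ} (hf : StrictMonoOn f s) {i : ℕ} (hi : i < #s) :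
    nth (s.image f) i = f (nth s i) := by
  have hi' : i < #(s.image f) := by rwa [card_image_of_injOn hf.injOn]
  refine ((eq_nth_iff hi').2 ⟨mem_image_of_mem f (nth_mem hi), ?_⟩).symm
  rw [card_filter_image_lt hf (nth_mem hi), card_filter_lt_nth hi]

lemma strictMonoOn_nth_of_mem_idx {n : ℕ} {p q z : Finset ℕ} (hp : p ∈ idx n) (hq : q ∈ idx n)
    (hz : #z = 2 * n) : StrictMonoOn (nth z) (p ∪ q) := by
  have hpq : p ∪ q ⊆ range #z :=
    hz ▸ union_subset (mem_powersetCard.1 hp).1 (mem_powersetCard.1 hq).1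
  rw [← coe_subset, coe_union, coe_range] at hpq
  exact (strictMonoOn_nth z).mono hpq

theorem stmt_10_general {p q : Finset ℕ} {f : ℕ → ℕ} (hf : StrictMonoOn f (p ∪ q)) {i j : ℕ}
    (hi : i < #p) (hj : j < #q) :
    nth (p.image f) i = nth (q.image f) j ↔
      nth p i ∈ q ∧ #{a ∈ q | a < nth p i} = j := by
  rw [nth_image (hf.mono Set.subset_union_left) hi, nth_image (hf.mono Set.subset_union_right) hj,
    hf.injOn.eq_iff (.inl (nth_mem hi)) (.inr (nth_mem hj)), eq_nth_iff hj]

/-- if `x →_{pq} y` then for `i, j < n`: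
`x_[i] = y_[j]` iff `i ∈ dom φ_{pq}` (i.e. `p_[i] ∈ q`) and `φ_{pq}(i) = j`
(i.e. the number of elements of `q` below `p_[i]` equals `j`). -/
theorem stmt_10 (n : ℕ) (hn : 1 ≤ n) (X : Set ℕ)
    (p q : Finset ℕ) (hp : p ∈ idx n) (hq : q ∈ idx n)
    (x y : Finset ℕ) (hx : ↑x ⊆ X) (hxc : x.card = n) (hy : ↑y ⊆ X) (hyc : y.card = n)
    (harr : Arrow X n p q x y) (i j : ℕ) (hi : i < n) (hj : j < n) :
    nth x i = nth y j ↔ (nth p i ∈ q ∧ (q.filter (fun a => a < nth p i)).card = j) := by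
  obtain ⟨z, -, hz, rfl, rfl⟩ := harr
  exact stmt_10_general (strictMonoOn_nth_of_mem_idx hp hq hz)
    ((mem_powersetCard.1 hp).2 ▸ hi) ((mem_powersetCard.1 hq).2 ▸ hj)
end

section
/- Let n ≥ 2, let P be a partition of [ω]^n, let Q ∈ P*, let X ⊆ ℕ be infinite with [X]^{2n} ⊆ Q, and let m = n^{n·B·(B−1)} where B = binomial(2n,n). Then for every x ∈ [X⁻]^n with sparsity d(x) ≥ m there is an (n·B·(B−1))-cascade x_0, x_1, …, x_l such that x_0 = x and x_0 ∩ x_l = { x_[i] : i ∈ I(Q) }. -/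
/-!
Enumerate `X` increasingly, so that `n`-subsets of `X` become increasing `n`-tuples of indices.
Since `[X]^{2n}` lies in a single atom `Q`, the relation `≈_P` becomes an equivalence relation on
tuples that depends only on how the two tuples are interleaved.

If two equivalent tuples `f`, `f'` disagree at the coordinate `k` and `f k` is not an entry of `f'`,
then moving `f k` within its gap keeps `f` equivalent to `f'`, so the `k`-th entry of every tuple
can be moved without leaving its class. If `f k` is an entry of `f'` and, say, `f k < f' k`, then
that entry has a coordinate smaller than `k`, at which `f` and `f'` also disagree; by induction it
can be moved away first. Hence all coordinates outside `I(Q)` are movable.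

Once the entries of `x` are at distance at least two in `X`, all of these coordinates can be raised
by one, and transitivity of `≈_P` turns the result into a single `↔_Q`-step. Thus a cascade of
length one suffices.
-/

section OrderInvariance

/-- The increasing enumeration of `ℕ \ {a}`. It opens a gap at `a`: applying it to tuples makes room
for a new entry while keeping the relative order of the old ones. -/
def skipEmb (a : ℕ) : ℕ ↪o ℕ :=
  OrderEmbedding.ofStrictMono (fun x => if x < a then x else x + 1) fun x y hxy => by
    dsimp only
    split_ifs <;> omega

theorem skipEmb_apply (a x : ℕ) : skipEmb a x = if x < a then x else x + 1 := rfl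

theorem skipEmb_ne (a x : ℕ) : skipEmb a x ≠ a := by
  rw [skipEmb_apply]
  split_ifs <;> omega

theorem skipEmb_self (a : ℕ) : skipEmb a a = a + 1 := by
  simp [skipEmb_apply]

theorem skipEmb_succ_of_ne {a x : ℕ} (h : x ≠ a) : skipEmb (a + 1) x = skipEmb a x := by
  simp only [skipEmb_apply]
  split_ifs <;> omega

theorem exists_orderEmbedding_comp_skipEmb (ψ : ℕ ↪o ℕ) (a : ℕ) :
    ∃ θ : ℕ ↪o ℕ, (skipEmb a).trans θ = ψ.trans (skipEmb (ψ a)) ∧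
      (skipEmb (a + 1)).trans θ = ψ.trans (skipEmb (ψ a + 1)) := by
  have hθ : StrictMono fun x => if x ≤ a then ψ x else ψ (x - 1) + 1 := by
    intro x y hxy
    have hψ : x < y - 1 → ψ x < ψ (y - 1) := fun h => ψ.lt_iff_lt.2 h
    have hψ' : x - 1 < y - 1 → ψ (x - 1) < ψ (y - 1) := fun h => ψ.lt_iff_lt.2 h
    have hψ'' : ψ x < ψ y := ψ.lt_iff_lt.2 hxy
    rcases (Nat.le_sub_one_of_lt hxy).eq_or_lt with h | h
    · subst h
      dsimp only
      split_ifs <;> omega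
    · dsimp only
      split_ifs <;> omega
  refine ⟨OrderEmbedding.ofStrictMono _ hθ, ?_, ?_⟩ <;>
    ext x <;>
    simp only [RelEmbedding.coe_trans, Function.comp_apply, OrderEmbedding.coe_ofStrictMono,
      skipEmb_apply] <;>
    rcases lt_trichotomy x a with h | rfl | h
  · grind [ψ.lt_iff_lt.2 h]
  · grind
  · grind [ψ.lt_iff_lt.2 h]
  · grind [ψ.lt_iff_lt.2 h]
  · grind
  · grind [ψ.lt_iff_lt.2 h]

variable {ι : Type*} [LinearOrder ι]

theorem exists_orderEmbedding_apply_eq_add [Finite ι] (f : ι ↪o ℕ) {g : ι → ℕ}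
    (hg : Monotone g) : ∃ φ : ℕ ↪o ℕ, ∀ i, φ (f i) = f i + g i := by
  have := Fintype.ofFinite ι
  let γ : ℕ → ℕ := fun a => (Finset.univ.filter fun j => f j ≤ a).sup g
  have hγ_mono : Monotone γ := fun a b hab =>
    Finset.sup_mono (Finset.monotone_filter_right _ fun _ _ hj => hj.trans hab)
  have hγ_apply (i : ι) : γ (f i) = g i := by
    refine le_antisymm (Finset.sup_le fun j hj => hg ?_) (Finset.le_sup (by simp))
    simpa only [Finset.mem_filter_univ, f.le_iff_le] using hj
  exact ⟨OrderEmbedding.ofStrictMono _ (strictMono_id.add_monotone hγ_mono),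
    fun i => congrArg (f i + ·) (hγ_apply i)⟩

theorem exists_orderEmbedding_trans_eq_trans [Finite ι] (f g : ι ↪o ℕ) :
    ∃ φ ψ : ℕ ↪o ℕ, f.trans φ = g.trans ψ := by
  obtain ⟨φ, hφ⟩ := exists_orderEmbedding_apply_eq_add f g.monotone
  obtain ⟨ψ, hψ⟩ := exists_orderEmbedding_apply_eq_add g f.monotone
  refine ⟨φ, ψ, ?_⟩
  ext i
  simp only [RelEmbedding.coe_trans, Function.comp_apply, hφ, hψ, add_comm]

/-- An equivalence relation on increasing `ι`-tuples of natural numbers is order invariant if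
whether it relates two tuples depends only on how their entries are interleaved. -/
def OrderInvariant (E : Setoid (ι ↪o ℕ)) : Prop :=
  ∀ (φ : ℕ ↪o ℕ) (f g : ι ↪o ℕ), E (f.trans φ) (g.trans φ) ↔ E f g

/-- The coordinate `k` is movable for `E` if changing only the `k`-th entry of a tuple, within the
gap between the neighbouring entries, does not change its `E`-class. The two tuples in the
definition are `f`, with the entries beyond `f k` shifted up by one, and the same tuple with its
`k`-th entry raised to `f k + 1`. -/
def Movable (E : Setoid (ι ↪o ℕ)) (k : ι) : Prop :=
  ∀ f : ι ↪o ℕ, E (f.trans (skipEmb (f k + 1))) (f.trans (skipEmb (f k)))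

namespace OrderInvariant

variable {E : Setoid (ι ↪o ℕ)} (hE : OrderInvariant E)
include hE

theorem movable_of_forall_ne [Finite ι] {f f' : ι ↪o ℕ} {k : ι} (hff' : E f f')
    (hk : ∀ j, f' j ≠ f k) : Movable E k := by
  intro g
  obtain ⟨φ, ψ, hφψ⟩ := exists_orderEmbedding_trans_eq_trans f g
  obtain ⟨θ, hθ, hθ'⟩ := exists_orderEmbedding_comp_skipEmb ψ (g k)
  set a := ψ (g k)
  have ha : φ (f k) = a := DFunLike.congr_fun hφψ k
  have hskip : (f'.trans φ).trans (skipEmb (a + 1)) = (f'.trans φ).trans (skipEmb a) := by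
    ext j
    exact skipEmb_succ_of_ne fun h => hk j (φ.injective (h.trans ha.symm))
  have hE_skip (b : ℕ) : E ((g.trans ψ).trans (skipEmb b)) ((f'.trans φ).trans (skipEmb b)) := by
    rw [← hφψ, hE, hE]
    exact hff'
  rw [← hE θ]
  change E (g.trans ((skipEmb (g k + 1)).trans θ)) (g.trans ((skipEmb (g k)).trans θ))
  rw [hθ, hθ']
  exact E.trans' (hE_skip (a + 1)) (hskip ▸ E.symm' (hE_skip a))

theorem movable_of_ne [Finite ι] {f f' : ι ↪o ℕ} {k : ι} (hff' : E f f') (hk : f k ≠ f' k) :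
    Movable E k := by
  induction k using WellFoundedLT.induction generalizing f f' with
  | _ k ih =>
  wlog hlt : f k < f' k generalizing f f'
  · exact this (E.symm' hff') hk.symm (hk.lt_or_gt.resolve_left hlt)
  by_cases hf' : ∀ j, f' j ≠ f k
  · exact hE.movable_of_forall_ne hff' hf'
  push Not at hf'
  obtain ⟨j, hj⟩ := hf'
  have hjk : j < k := f'.lt_iff_lt.1 (hj ▸ hlt)
  have hj_movable : Movable E j := ih j hjk hff' (hj ▸ (f.lt_iff_lt.2 hjk).ne)
  -- Opening a gap at `f k` raises both `f k` and `f' j` by one; moving `j` lowers `f' j` again.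
  refine hE.movable_of_forall_ne
    (E.trans' ((hE (skipEmb (f k)) f f').2 hff') (hj ▸ E.symm' (hj_movable f'))) fun i => ?_
  simpa only [RelEmbedding.coe_trans, Function.comp_apply, skipEmb_self, hj]
    using skipEmb_ne (f k + 1) (f' i)

theorem rel_of_apply_eq_succ {k : ι} (hk : Movable E k) {f g : ι ↪o ℕ} (hgk : g k = f k + 1)
    (hg : ∀ i ≠ k, g i = f i) : E f g := by
  have hfk {i : ι} (hi : i ≠ k) : f i ≠ f k ∧ f i ≠ f k + 1 :=
    ⟨f.injective.ne hi, by rw [← hgk, ← hg i hi]; exact g.injective.ne hi⟩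
  have hf_skip : f.trans (skipEmb (f k + 2)) = f.trans (skipEmb (f k + 1)) := by
    ext i
    refine skipEmb_succ_of_ne ?_
    by_cases hi : i = k
    · simp [hi]
    · exact (hfk hi).2
  have hg_skip : g.trans (skipEmb (f k + 2)) = f.trans (skipEmb (f k)) := by
    ext i
    simp only [RelEmbedding.coe_trans, Function.comp_apply]
    by_cases hi : i = k
    · simp [hi, hgk, skipEmb_apply]
    · rw [hg i hi, skipEmb_succ_of_ne (hfk hi).2, skipEmb_succ_of_ne (hfk hi).1]
  rw [← hE (skipEmb (f k + 2)), hf_skip, hg_skip]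
  exact hk f

end OrderInvariant

/-- The tuple obtained from `f` by raising the entries with index in `S` by one. -/
def advance (f : ι ↪o ℕ) (hf : ∀ i j, i < j → f i + 1 < f j) (S : Finset ι) : ι ↪o ℕ :=
  OrderEmbedding.ofStrictMono (fun i => if i ∈ S then f i + 1 else f i) fun i j hij => by
    have := hf i j hij
    dsimp only
    split_ifs <;> omega

variable {f : ι ↪o ℕ} (hf : ∀ i j, i < j → f i + 1 < f j)

theorem advance_apply (S : Finset ι) (i : ι) :
    advance f hf S i = if i ∈ S then f i + 1 else f i := rfl

theorem le_advance (S : Finset ι) (i : ι) : f i ≤ advance f hf S i := by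
  rw [advance_apply]
  split_ifs <;> omega

theorem advance_le_succ (S : Finset ι) (i : ι) : advance f hf S i ≤ f i + 1 := by
  rw [advance_apply]
  split_ifs <;> omega

theorem advance_eq_apply_iff (S : Finset ι) (i j : ι) :
    advance f hf S i = f j ↔ i = j ∧ i ∉ S := by
  rw [advance_apply]
  rcases lt_trichotomy i j with h | rfl | h
  · have hij := hf i j h
    have h_ne : (if i ∈ S then f i + 1 else f i) ≠ f j := by split_ifs <;> omega
    simp only [h_ne, h.ne, false_and]
  · simp
  · have hji := hf j i h
    have h_ne : (if i ∈ S then f i + 1 else f i) ≠ f j := by split_ifs <;> omega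
    simp only [h_ne, h.ne', false_and]

theorem range_inter_range_advance (S : Finset ι) :
    Set.range f ∩ Set.range (advance f hf S) = f '' {i | i ∉ S} := by
  ext a
  constructor
  · rintro ⟨⟨j, rfl⟩, i, hi⟩
    obtain ⟨rfl, hiS⟩ := (advance_eq_apply_iff hf S i j).1 hi
    exact ⟨i, hiS, rfl⟩
  · rintro ⟨i, hi, rfl⟩
    exact ⟨⟨i, rfl⟩, i, (advance_eq_apply_iff hf S i i).2 ⟨rfl, hi⟩⟩

theorem OrderInvariant.rel_advance {E : Setoid (ι ↪o ℕ)} (hE : OrderInvariant E) {S : Finset ι}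
    (hS : ∀ i ∈ S, Movable E i) : E f (advance f hf S) := by
  induction S using Finset.induction_on with
  | empty =>
    have h_empty : advance f hf ∅ = f := by
      ext i
      simp [advance_apply]
    rw [h_empty]
  | insert k S hk ih =>
    refine E.trans' (ih fun i hi => hS i (Finset.mem_insert_of_mem hi))
      (hE.rel_of_apply_eq_succ (hS k (Finset.mem_insert_self k S)) ?_ fun i hi => ?_)
    · simp [advance_apply, hk]
    · simp [advance_apply, hi]

end OrderInvariance

section Nth

theorem nth_eq_orderEmbOfFin {s : Finset ℕ} {n : ℕ} (hs : s.card = n) (i : Fin n) :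
    nth s i = s.orderEmbOfFin hs i := by
  rw [Finset.orderEmbOfFin_apply, nth, List.getD_eq_getElem]
  rfl

theorem nth_map {s : Finset ℕ} {i : ℕ} (hi : i < s.card) (φ : ℕ ↪o ℕ) :
    nth (s.map φ.toEmbedding) i = φ (nth s i) := by
  have hcard : (s.map φ.toEmbedding).card = s.card := Finset.card_map _
  have h_enum : (s.orderEmbOfFin rfl).trans φ = (s.map φ.toEmbedding).orderEmbOfFin hcard :=
    Finset.orderEmbOfFin_unique' hcard fun j =>
      Finset.mem_map_of_mem _ (Finset.orderEmbOfFin_mem s rfl j)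
  rw [nth_eq_orderEmbOfFin hcard ⟨i, hi⟩, nth_eq_orderEmbOfFin rfl ⟨i, hi⟩, ← h_enum]
  rfl

theorem nth_range {N i : ℕ} (hi : i < N) : nth (Finset.range N) i = i := by
  rw [nth, Finset.sort_range, List.getD_eq_getElem _ _ (by simpa using hi), List.getElem_range]

theorem image_nth_map {z p : Finset ℕ} (hp : p ⊆ Finset.range z.card) (φ : ℕ ↪o ℕ) :
    p.image (nth (z.map φ.toEmbedding)) = (p.image (nth z)).map φ.toEmbedding := by
  rw [Finset.map_eq_image _ (p.image _), Finset.image_image]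
  exact Finset.image_congr fun i hi => nth_map (Finset.mem_range.1 (hp hi)) φ

theorem image_nth_range {N : ℕ} {p : Finset ℕ} (hp : p ⊆ Finset.range N) :
    p.image (nth (Finset.range N)) = p := by
  rw [Finset.image_congr fun i hi => nth_range (Finset.mem_range.1 (hp hi)), Finset.image_id']

theorem mem_idx {n : ℕ} {p : Finset ℕ} :
    p ∈ idx n ↔ p ⊆ Finset.range (2 * n) ∧ p.card = n :=
  Finset.mem_powersetCard

theorem range_mem_idx (n : ℕ) : Finset.range n ∈ idx n :=
  mem_idx.2 ⟨Finset.range_subset_range.2 (by omega), Finset.card_range n⟩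

theorem exists_mem_idx_image_nth_eq {n : ℕ} {u z : Finset ℕ} (huz : u ⊆ z) (hu : u.card = n)
    (hz : z.card = 2 * n) : ∃ p ∈ idx n, p.image (nth z) = u := by
  obtain ⟨s, -, rfl⟩ := Finset.subset_map_iff.1
    (huz.trans_eq (Finset.map_orderEmbOfFin_univ z hz).symm)
  refine ⟨s.map Fin.valEmbedding, mem_idx.2 ⟨fun i hi => ?_, by simpa using hu⟩, ?_⟩
  · obtain ⟨j, -, rfl⟩ := Finset.mem_map.1 hi
    exact Finset.mem_range.2 j.2
  · rw [Finset.map_eq_image, Finset.image_image, Finset.map_eq_image]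
    exact Finset.image_congr fun j _ => nth_eq_orderEmbOfFin hz j

theorem exists_mem_idx_image_nth_eq_image_nth_eq {n : ℕ} {u v : Finset ℕ} (hu : u.card = n)
    (hv : v.card = n) : ∃ z : Finset ℕ, z.card = 2 * n ∧
      (∃ p ∈ idx n, p.image (nth z) = u) ∧ ∃ q ∈ idx n, q.image (nth z) = v := by
  obtain ⟨z, huvz, hz⟩ := Infinite.exists_superset_card_eq (u ∪ v) (2 * n) <|
    (Finset.card_union_le u v).trans_eq (by omega)
  exact ⟨z, hz, exists_mem_idx_image_nth_eq (Finset.subset_union_left.trans huvz) hu hz,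
    exists_mem_idx_image_nth_eq (Finset.subset_union_right.trans huvz) hv hz⟩

end Nth

section TupleSet

variable {n : ℕ}

/-- The `n`-element subset of the range of `φ` whose elements have the indices listed by `f`. -/
def tupleSet (φ : ℕ ↪o ℕ) (f : Fin n ↪o ℕ) : Finset ℕ :=
  (Finset.univ.map f.toEmbedding).map φ.toEmbedding

theorem exists_tupleSet_eq {φ : ℕ ↪o ℕ} {x : Finset ℕ} (hx : ↑x ⊆ Set.range φ)
    (hx_card : x.card = n) : ∃ f : Fin n ↪o ℕ, tupleSet φ f = x := by
  rw [← Set.image_univ] at hx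
  obtain ⟨u, -, rfl⟩ := Finset.subset_set_image_iff.1 hx
  have hu : u.card = n := (Finset.card_image_of_injective u φ.injective).symm.trans hx_card
  refine ⟨u.orderEmbOfFin hu, ?_⟩
  rw [tupleSet, Finset.map_orderEmbOfFin_univ, Finset.map_eq_image]
  rfl

variable (φ : ℕ ↪o ℕ) (f : Fin n ↪o ℕ)

theorem coe_tupleSet : (tupleSet φ f : Set ℕ) = φ '' Set.range f := by
  simp [tupleSet]

theorem mem_tupleSet {b : ℕ} : b ∈ tupleSet φ f ↔ ∃ i, φ (f i) = b := by
  simp [tupleSet]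

theorem card_tupleSet : (tupleSet φ f).card = n := by
  simp [tupleSet]

theorem tupleSet_trans (ψ : ℕ ↪o ℕ) :
    tupleSet φ (f.trans ψ) =
      ((Finset.univ.map f.toEmbedding).map ψ.toEmbedding).map φ.toEmbedding :=
  congrArg (Finset.map φ.toEmbedding) (Finset.map_map f.toEmbedding ψ.toEmbedding _).symm

theorem nth_tupleSet (i : Fin n) : nth (tupleSet φ f) i = φ (f i) := by
  rw [nth_eq_orderEmbOfFin (card_tupleSet φ f), ← Finset.orderEmbOfFin_unique' (f := f.trans φ)
    (card_tupleSet φ f) fun j => (mem_tupleSet φ f).2 ⟨j, rfl⟩]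
  rfl

theorem image_nth_tupleSet {I : Set ℕ} (hI : ∀ k ∈ I, k < n) :
    nth (tupleSet φ f) '' I = φ '' (f '' {i | (i : ℕ) ∈ I}) := by
  ext a
  constructor
  · rintro ⟨k, hk, rfl⟩
    exact ⟨_, ⟨⟨k, hI k hk⟩, hk, rfl⟩, (nth_tupleSet φ f ⟨k, hI k hk⟩).symm⟩
  · rintro ⟨_, ⟨i, hi, rfl⟩, rfl⟩
    exact ⟨i, hi, nth_tupleSet φ f i⟩

end TupleSet

section Sparsity

variable (φ : ℕ ↪o ℕ)

theorem rho_range_apply {a b : ℕ} (hab : a ≤ b) : rho (Set.range φ) (φ a) (φ b) = b - a := by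
  have h_preimage : φ ⁻¹' Set.Ico (φ a) (φ b) = Finset.Ico a b := by
    ext c
    simp
  rw [rho, min_eq_left (φ.monotone hab), max_eq_right (φ.monotone hab), Set.inter_comm,
    ← Set.image_preimage_eq_inter_range, h_preimage, Set.ncard_image_of_injective _ φ.injective,
    Set.ncard_coe_finset, Nat.card_Ico]

theorem sparsity_le_rho {X : Set ℕ} {e : ℕ} {x : Finset ℕ} {a b : ℕ} (ha : a ∈ x) (hb : b ∈ x)
    (hab : a ≠ b) : sparsity X e x ≤ rho X a b :=
  (iInf₂_le a (Finset.mem_union_left _ ha)).trans <|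
    (iInf₂_le b (Finset.mem_union_left _ hb)).trans <| iInf_le _ hab

theorem add_le_of_le_sparsity_tupleSet {n e d : ℕ} {f : Fin n ↪o ℕ}
    (hd : (d : ℕ∞) ≤ sparsity (Set.range φ) e (tupleSet φ f)) {i j : Fin n} (hij : i < j) :
    f i + d ≤ f j := by
  have hf : f i < f j := f.lt_iff_lt.2 hij
  have h_rho := hd.trans (sparsity_le_rho ((mem_tupleSet φ f).2 ⟨i, rfl⟩)
    ((mem_tupleSet φ f).2 ⟨j, rfl⟩) (φ.injective.ne hf.ne))
  rw [rho_range_apply φ hf.le, Nat.cast_le] at h_rho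
  omega

theorem rfun_le {X : Set ℕ} {e c : ℕ} {x y : Finset ℕ}
    (h : ∀ b ∈ y, ∃ a ∈ x, a ≤ b ∧ rho X a b ≤ c) : rfun X e x y ≤ c := by
  refine Finset.sup_le fun b hb => ?_
  obtain ⟨a, ha, hab, hρ⟩ := h b hb
  have ha_mem : a ∈ {a | a ∈ x ∪ {e} ∧ a ≤ b} := ⟨Finset.mem_union_left _ ha, hab⟩
  exact (Nat.sInf_le (Set.mem_image_of_mem _ ha_mem)).trans hρ

theorem rfun_tupleSet_advance_le_one {n e : ℕ} {f : Fin n ↪o ℕ}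
    (hf : ∀ i j, i < j → f i + 1 < f j) (S : Finset (Fin n)) :
    rfun (Set.range φ) e (tupleSet φ f) (tupleSet φ (advance f hf S)) ≤ 1 := by
  refine rfun_le fun b hb => ?_
  obtain ⟨i, rfl⟩ := (mem_tupleSet _ _).1 hb
  have hi := le_advance hf S i
  refine ⟨φ (f i), (mem_tupleSet _ _).2 ⟨i, rfl⟩, φ.monotone hi, ?_⟩
  rw [rho_range_apply φ hi]
  exact Nat.sub_le_iff_le_add'.2 (advance_le_succ hf S i)

end Sparsity

section Atoms

variable {n : ℕ} {P : Set (Set (Finset ℕ))} {Q : Set (Finset ℕ)}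

theorem subset_Qpq_iff_mem (hQ : Q ∈ Atoms n P) {z p q : Finset ℕ} (hz : z ∈ Q) (hp : p ∈ idx n)
    (hq : q ∈ idx n) : Q ⊆ Qpq n P p q ↔ z ∈ Qpq n P p q := by
  refine ⟨fun h => h hz, fun hzpq => ?_⟩
  obtain ⟨-, S, hS, rfl⟩ := hQ
  have h_le : (⋂ p ∈ idx n, ⋂ q ∈ idx n, S p q) ⊆ S p q :=
    (Set.biInter_subset_of_mem hp).trans (Set.biInter_subset_of_mem hq)
  rcases hS p hp q hq with h | h
  · exact h ▸ h_le
  · exact absurd hzpq (h ▸ h_le hz).2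

theorem EquivP.symm {u v : Finset ℕ} (h : EquivP P u v) : EquivP P v u :=
  let ⟨A, hA, hu, hv⟩ := h
  ⟨A, hA, hv, hu⟩

theorem IsPartitionOn.equivP_refl {Z : Set (Finset ℕ)} (hP : IsPartitionOn Z P) {u : Finset ℕ}
    (hu : u ∈ Z) : EquivP P u u :=
  let ⟨A, hA, huA⟩ := Set.mem_sUnion.1 (hP.1.symm ▸ hu)
  ⟨A, hA, huA, huA⟩

theorem IsPartitionOn.equivP_trans {Z : Set (Finset ℕ)} (hP : IsPartitionOn Z P)
    {u v w : Finset ℕ} (huv : EquivP P u v) (hvw : EquivP P v w) : EquivP P u w := by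
  obtain ⟨A, hA, huA, hvA⟩ := huv
  obtain ⟨B, hB, hvB, hwB⟩ := hvw
  obtain h_disj | rfl := hP.2 A hA B hB
  · exact absurd (Set.mem_inter hvA hvB) (h_disj ▸ Set.notMem_empty v)
  · exact ⟨A, hA, huA, hwB⟩

/-- The equivalence `≈_P` transported to increasing `n`-tuples of indices into the infinite set
enumerated by `φ`. -/
def tupleSetoid (hP : IsPartitionOn (cube n) P) (φ : ℕ ↪o ℕ) : Setoid (Fin n ↪o ℕ) where
  r f g := EquivP P (tupleSet φ f) (tupleSet φ g)
  iseqv :=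
    { refl := fun f => hP.equivP_refl (card_tupleSet φ f)
      symm := EquivP.symm
      trans := hP.equivP_trans }

variable {φ : ℕ ↪o ℕ} (hQ : Q ∈ Atoms n P)
  (hφQ : ∀ z : Finset ℕ, z.card = 2 * n → z.map φ.toEmbedding ∈ Q)
include hQ hφQ

theorem subset_Qpq_iff_equivP_image_nth {z p q : Finset ℕ} (hz : z.card = 2 * n)
    (hp : p ∈ idx n) (hq : q ∈ idx n) :
    Q ⊆ Qpq n P p q ↔ EquivP P ((p.image (nth z)).map φ.toEmbedding)
      ((q.image (nth z)).map φ.toEmbedding) := by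
  rw [subset_Qpq_iff_mem hQ (hφQ z hz) hp hq, Qpq, Set.mem_ofPred_eq, Finset.card_map,
    image_nth_map (hz ▸ (mem_idx.1 hp).1), image_nth_map (hz ▸ (mem_idx.1 hq).1)]
  exact and_iff_right hz

theorem subset_Qpq_iff_equivP_map {p q : Finset ℕ} (hp : p ∈ idx n) (hq : q ∈ idx n) :
    Q ⊆ Qpq n P p q ↔ EquivP P (p.map φ.toEmbedding) (q.map φ.toEmbedding) := by
  rw [subset_Qpq_iff_equivP_image_nth hQ hφQ (Finset.card_range (2 * n)) hp hq,
    image_nth_range (mem_idx.1 hp).1, image_nth_range (mem_idx.1 hq).1]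

theorem equivP_map_map_iff {u v : Finset ℕ} (hu : u.card = n) (hv : v.card = n) (ψ : ℕ ↪o ℕ) :
    EquivP P ((u.map ψ.toEmbedding).map φ.toEmbedding) ((v.map ψ.toEmbedding).map φ.toEmbedding) ↔
      EquivP P (u.map φ.toEmbedding) (v.map φ.toEmbedding) := by
  obtain ⟨z, hz, ⟨p, hp, rfl⟩, q, hq, rfl⟩ := exists_mem_idx_image_nth_eq_image_nth_eq hu hv
  have hz_map : (z.map ψ.toEmbedding).card = 2 * n := (Finset.card_map _).trans hz
  rw [← image_nth_map (hz ▸ (mem_idx.1 hp).1) ψ, ← image_nth_map (hz ▸ (mem_idx.1 hq).1) ψ,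
    ← subset_Qpq_iff_equivP_image_nth hQ hφQ hz_map hp hq,
    ← subset_Qpq_iff_equivP_image_nth hQ hφQ hz hp hq]

theorem relQ_of_equivP_map {u v : Finset ℕ} (hu : u.card = n) (hv : v.card = n)
    (huv : EquivP P (u.map φ.toEmbedding) (v.map φ.toEmbedding)) :
    RelQ n P Q (Set.range φ) (u.map φ.toEmbedding) (v.map φ.toEmbedding) := by
  obtain ⟨z, hz, ⟨p, hp, rfl⟩, q, hq, rfl⟩ := exists_mem_idx_image_nth_eq_image_nth_eq hu hv
  refine ⟨p, hp, q, hq, (subset_Qpq_iff_equivP_image_nth hQ hφQ hz hp hq).2 huv,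
    z.map φ.toEmbedding, ?_, (Finset.card_map _).trans hz,
    image_nth_map (hz ▸ (mem_idx.1 hp).1) φ, image_nth_map (hz ▸ (mem_idx.1 hq).1) φ⟩
  rw [Finset.coe_map]
  exact Set.image_subset_range _ _

variable (hP : IsPartitionOn (cube n) P)
include hP

theorem orderInvariant_tupleSetoid : OrderInvariant (tupleSetoid hP φ) := by
  intro ψ f g
  change EquivP P (tupleSet φ (f.trans ψ)) (tupleSet φ (g.trans ψ)) ↔ _
  rw [tupleSet_trans, tupleSet_trans]
  exact equivP_map_map_iff hQ hφQ (by simp) (by simp) ψ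

theorem lt_of_mem_IofQ {k : ℕ} (hk : k ∈ IofQ n P Q) : k < n := by
  have h_subset : Q ⊆ Qpq n P (Finset.range n) (Finset.range n) :=
    (subset_Qpq_iff_equivP_map hQ hφQ (range_mem_idx n) (range_mem_idx n)).2
      (hP.equivP_refl (by simp [cube]))
  simp only [IofQ, Set.mem_iInter] at hk
  exact (hk _ (range_mem_idx n) _ (range_mem_idx n) h_subset).1

theorem movable_of_notMem_IofQ {k : Fin n} (hk : (k : ℕ) ∉ IofQ n P Q) :
    Movable (tupleSetoid hP φ) k := by
  simp only [IofQ, Set.mem_iInter, not_forall] at hk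
  obtain ⟨p, hp, q, hq, hpq, hk⟩ := hk
  have hp_card := (mem_idx.1 hp).2
  have hq_card := (mem_idx.1 hq).2
  have h_ne : p.orderEmbOfFin hp_card k ≠ q.orderEmbOfFin hq_card k := by
    rw [← nth_eq_orderEmbOfFin, ← nth_eq_orderEmbOfFin]
    exact fun h => hk ⟨k.2, h⟩
  refine (orderInvariant_tupleSetoid hQ hφQ hP).movable_of_ne (f := p.orderEmbOfFin hp_card)
    (f' := q.orderEmbOfFin hq_card) ?_ h_ne
  change EquivP P (tupleSet φ _) (tupleSet φ _)
  rw [tupleSet, tupleSet, Finset.map_orderEmbOfFin_univ, Finset.map_orderEmbOfFin_univ]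
  exact (subset_Qpq_iff_equivP_map hQ hφQ hp hq).1 hpq

end Atoms

section Cascade

variable {n : ℕ} {P : Set (Set (Finset ℕ))} {Q : Set (Finset ℕ)} {X : Set ℕ} {e : ℕ}

theorem isCascade_one {t : ℕ} {xs : ℕ → Finset ℕ} (h₀ : ↑(xs 0) ⊆ X \ {e} ∧ (xs 0).card = n)
    (h₁ : ↑(xs 1) ⊆ X \ {e} ∧ (xs 1).card = n)
    (hd : ((n ^ t : ℕ) : ℕ∞) ≤ sparsity X e (xs 0)) (hr : rfun X e (xs 0) (xs 1) ≤ n ^ (t - 1))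
    (h_rel : RelQ n P Q X (xs 0) (xs 1)) : IsCascade n P Q X e t 1 xs := by
  refine ⟨fun i hi => ?_, fun i hi => ?_⟩
  · obtain rfl | rfl := Nat.le_one_iff_eq_zero_or_eq_one.1 hi
    exacts [h₀, h₁]
  · obtain rfl := Nat.lt_one_iff.1 hi
    exact ⟨hd, hr, h_rel⟩

theorem exists_relQ_inter_eq (hP : IsPartitionOn (cube n) P) (hQ : Q ∈ Atoms n P)
    (hX : X.Infinite) (hXQ : ∀ z : Finset ℕ, ↑z ⊆ X → z.card = 2 * n → z ∈ Q) (he : e = sInf X)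
    {x : Finset ℕ} (hx : ↑x ⊆ X \ {e}) (hx_card : x.card = n) (hd : 2 ≤ sparsity X e x) :
    ∃ y : Finset ℕ, (↑y ⊆ X \ {e} ∧ y.card = n) ∧ rfun X e x y ≤ 1 ∧ RelQ n P Q X x y ∧
      (↑(x ∩ y) : Set ℕ) = nth x '' IofQ n P Q := by
  classical
  have := hX.to_subtype
  obtain ⟨φ, rfl⟩ : ∃ φ : ℕ ↪o ℕ, Set.range φ = X :=
    ⟨Nat.orderEmbeddingOfSet X, Nat.orderEmbeddingOfSet_range X⟩
  obtain ⟨f, rfl⟩ := exists_tupleSet_eq (hx.trans Set.sdiff_subset) hx_card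
  have hφQ (z : Finset ℕ) (hz : z.card = 2 * n) : z.map φ.toEmbedding ∈ Q :=
    hXQ _ (by simp) ((Finset.card_map _).trans hz)
  have hf (i j : Fin n) (hij : i < j) : f i + 1 < f j :=
    add_le_of_le_sparsity_tupleSet φ (d := 2) hd hij
  set S : Finset (Fin n) := {i | (i : ℕ) ∉ IofQ n P Q} with hS
  refine ⟨tupleSet φ (advance f hf S), ⟨?_, card_tupleSet _ _⟩,
    rfun_tupleSet_advance_le_one φ hf S, ?_, ?_⟩
  · intro b hb
    obtain ⟨i, rfl⟩ := (mem_tupleSet _ _).1 hb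
    have h_ne : φ (f i) ≠ e := (hx ((mem_tupleSet φ f).2 ⟨i, rfl⟩)).2
    have he_le : e ≤ φ (f i) := he ▸ Nat.sInf_le ⟨f i, rfl⟩
    exact ⟨⟨_, rfl⟩, ((he_le.lt_of_ne' h_ne).trans_le (φ.monotone (le_advance hf S i))).ne'⟩
  · exact relQ_of_equivP_map hQ hφQ (by simp) (by simp)
      ((orderInvariant_tupleSetoid hQ hφQ hP).rel_advance hf fun i hi =>
        movable_of_notMem_IofQ hQ hφQ hP (by simpa [hS] using hi))
  · rw [Finset.coe_inter, coe_tupleSet, coe_tupleSet, ← Set.image_inter φ.injective,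
      range_inter_range_advance, image_nth_tupleSet φ f fun k => lt_of_mem_IofQ hQ hφQ hP]
    simp [hS]

theorem two_le_pow_mul_choose_mul_choose_sub_one (hn : 2 ≤ n) :
    2 ≤ n ^ (n * Nat.choose (2 * n) n * (Nat.choose (2 * n) n - 1)) := by
  have h_choose : 2 ≤ Nat.choose (2 * n) n := Nat.two_le_centralBinom n (by omega)
  refine hn.trans (Nat.le_self_pow (mul_ne_zero (mul_ne_zero ?_ ?_) ?_) n) <;> omega

end Cascade

theorem stmt_12_general (n : ℕ) (P : Set (Set (Finset ℕ)))
    (hP : IsPartitionOn (cube n) P) (Q : Set (Finset ℕ)) (hQ : Q ∈ Atoms n P)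
    (X : Set ℕ) (hX : X.Infinite)
    (hXQ : ∀ z : Finset ℕ, ↑z ⊆ X → z.card = 2 * n → z ∈ Q)
    (e : ℕ) (he : e = sInf X) (t : ℕ)
    (x : Finset ℕ) (hx : ↑x ⊆ X \ {e}) (hxc : x.card = n)
    (hd : ((n ^ t : ℕ) : ℕ∞) ≤ sparsity X e x) (hd₂ : 2 ≤ sparsity X e x) :
    ∃ xs : ℕ → Finset ℕ, xs 0 = x ∧ IsCascade n P Q X e t 1 xs ∧
      (↑(xs 0 ∩ xs 1) : Set ℕ) = nth x '' (IofQ n P Q) := by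
  obtain ⟨y, hy, hr, h_rel, h_inter⟩ := exists_relQ_inter_eq hP hQ hX hXQ he hx hxc hd₂
  have hr_pow : rfun X e x y ≤ n ^ (t - 1) := by
    rcases n.eq_zero_or_pos with rfl | hn
    · simp [rfun, Finset.card_eq_zero.1 hy.2]
    · exact hr.trans (Nat.one_le_pow _ _ hn)
  exact ⟨fun i => if i = 0 then x else y, rfl, isCascade_one ⟨hx, hxc⟩ hy hd hr_pow h_rel, h_inter⟩

/-- for every `x ∈ [X⁻]^n` with `d(x) ≥ m = n^{n·B·(B-1)}` there is an
`(n·B·(B-1))`-cascade `x_0, …, x_l` with `x_0 = x` and `x_0 ∩ x_l = {x_[i] : i ∈ I(Q)}`. -/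
theorem stmt_12 (n : ℕ) (hn : 2 ≤ n) (P : Set (Set (Finset ℕ)))
    (hP : IsPartitionOn (cube n) P) (Q : Set (Finset ℕ)) (hQ : Q ∈ Atoms n P)
    (X : Set ℕ) (hX : X.Infinite)
    (hXQ : ∀ z : Finset ℕ, ↑z ⊆ X → z.card = 2 * n → z ∈ Q)
    (e : ℕ) (he : e = sInf X)
    (m : ℕ) (hm : m = n ^ (n * Nat.choose (2 * n) n * (Nat.choose (2 * n) n - 1)))
    (x : Finset ℕ) (hx : ↑x ⊆ X \ {e}) (hxc : x.card = n)
    (hd : (m : ℕ∞) ≤ sparsity X e x) :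
    ∃ (l : ℕ) (xs : ℕ → Finset ℕ), 1 ≤ l ∧ xs 0 = x ∧
      IsCascade n P Q X e (n * Nat.choose (2 * n) n * (Nat.choose (2 * n) n - 1)) l xs ∧
      (↑(xs 0 ∩ xs l) : Set ℕ) = nth x '' (IofQ n P Q) := by
  have hm₂ : (2 : ℕ∞) ≤ m := by exact_mod_cast hm ▸ two_le_pow_mul_choose_mul_choose_sub_one hn
  obtain ⟨xs, h₀, h_cascade, h_inter⟩ := stmt_12_general n P hP Q hQ X hX hXQ e he
    (n * Nat.choose (2 * n) n * (Nat.choose (2 * n) n - 1)) x hx hxc (hm ▸ hd) (hm₂.trans hd)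
  exact ⟨1, xs, le_rfl, h₀, h_cascade, h_inter⟩
end

section
/- A nonprincipal ultrafilter u on ℕ is a Ramsey ultrafilter if and only if for every n ≥ 1 and every function f : ℕ^n → ℕ, u contains some set X such that f is either selectively upward injective on X or upward constant on X. -/
/-!
If `u` is Ramsey, colour each increasing `(n + n)`-tuple `z` by the set of pairs `(p, q)` of index
maps with `f (z ∘ p) = f (z ∘ q)`. On a homogeneous set, enumerated as a copy of `ℕ`, whether
`f x = f y` is then unaffected by applying a strictly increasing map to both tuples. Call a
coordinate inert if `f` does not depend on it, and suppose `f x = f y` with `x i < y i`. Stretch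
both tuples so that only the value `x i` moves. This leaves `f y` unchanged: if `y j = x i`, then
`j < i` and `x j ≠ y j`, so `j` is inert by induction. Hence `f x` is unchanged as well, and
homogeneity makes `i` inert. So `f` is selectively upward injective with respect to the set of
coordinates that are not inert.

Conversely, a function with finitely many values cannot be selectively upward injective with
respect to a nonempty set on an infinite set; so a function which names the block of a finite
partition is upward constant on a set in `u`, and that set is homogeneous.
-/

section InertCoordinates

variable {α β : Type*} {n : ℕ}

/-- The coordinate `i` is inert for `g` if the value of `g` at an increasing tuple does not depend
on the `i`-th entry. Only increasing tuples are compared. -/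
def IsInert [Preorder α] (g : (Fin n → α) → β) (i : Fin n) : Prop :=
  ∀ ⦃x y : Fin n → α⦄, StrictMono x → StrictMono y → (∀ j ≠ i, x j = y j) → g x = g y

theorem strictMono_ite_val_lt [Preorder α] {x y : Fin n → α} (hx : StrictMono x)
    (hy : StrictMono y) (hxy : x ≤ y) (k : ℕ) :
    StrictMono fun i : Fin n ↦ if i.val < k then x i else y i :=
  StrictMono.ite' hx hy (fun _ _ hab hb ↦ lt_trans (Fin.lt_def.1 hab) hb)
    fun _ b _ _ hab ↦ (hx hab).trans_le (hxy b)

theorem apply_eq_of_le_of_isInert [Preorder α] {g : (Fin n → α) → β} {x y : Fin n → α}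
    (hx : StrictMono x) (hy : StrictMono y) (hxy : x ≤ y)
    (hinert : ∀ i, x i ≠ y i → IsInert g i) : g x = g y := by
  let z (k : ℕ) (i : Fin n) : α := if i.val < k then x i else y i
  have z_strictMono (k : ℕ) : StrictMono (z k) := strictMono_ite_val_lt hx hy hxy k
  have z_succ_of_ne {k : ℕ} {j : Fin n} (hj : j.val ≠ k) : z (k + 1) j = z k j := by
    simp only [z, Nat.lt_succ_iff_lt_or_eq, hj, or_false]
  have g_z_succ (k : ℕ) : g (z (k + 1)) = g (z k) := by
    by_cases hk : ∃ i : Fin n, i.val = k ∧ x i ≠ y i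
    · obtain ⟨i, rfl, hi⟩ := hk
      exact hinert i hi (z_strictMono _) (z_strictMono _)
        fun j hj ↦ z_succ_of_ne (Fin.val_ne_of_ne hj)
    · congr 1
      funext j
      by_cases hj : j.val = k
      · have hxyj : x j = y j := by_contra fun hne ↦ hk ⟨j, hj, hne⟩
        simp only [z, hxyj, ite_self]
      · exact z_succ_of_ne hj
  have g_z (k : ℕ) : g (z k) = g (z 0) := by
    induction k with
    | zero => rfl
    | succ k ih => exact (g_z_succ k).trans ih
  simpa [z] using g_z n

theorem apply_eq_of_isInert [LinearOrder α] {g : (Fin n → α) → β} {x y : Fin n → α}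
    (hx : StrictMono x) (hy : StrictMono y) (hinert : ∀ i, x i ≠ y i → IsInert g i) :
    g x = g y := by
  have hxy : StrictMono (x ⊔ y) := fun _ _ hab ↦ max_lt_max (hx hab) (hy hab)
  have hx_sup : g x = g (x ⊔ y) :=
    apply_eq_of_le_of_isInert hx hxy le_sup_left fun i hi ↦
      hinert i fun h ↦ hi (by simp [h])
  have hy_sup : g y = g (x ⊔ y) :=
    apply_eq_of_le_of_isInert hy hxy le_sup_right fun i hi ↦
      hinert i fun h ↦ hi (by simp [h])
  exact hx_sup.trans hy_sup.symm

end InertCoordinates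

section StretchInvariance

variable {β : Type*} {n : ℕ} {g : (Fin n → ℕ) → β} {i : Fin n} {x y : Fin n → ℕ}

/-- `g` is stretch invariant if whether `g` agrees on two tuples is unaffected by applying one and
the same strictly increasing map to all entries of both. -/
def StretchInvariant (g : (Fin n → ℕ) → β) : Prop :=
  ∀ ⦃h : ℕ → ℕ⦄, StrictMono h → ∀ x y : Fin n → ℕ, g (h ∘ x) = g (h ∘ y) ↔ g x = g y

theorem exists_strictMono_comp_val_eq (hx : StrictMono x) :
    ∃ h : ℕ → ℕ, StrictMono h ∧ h ∘ Fin.val = x := by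
  refine ⟨fun m ↦ if hm : m < n then x ⟨m, hm⟩ else m + ∑ j, x j, fun a b hab ↦ ?_, ?_⟩
  · by_cases hb : b < n
    · simpa only [hb, hab.trans hb, dif_pos] using hx (Fin.mk_lt_mk.2 hab)
    · by_cases ha : a < n
      · have hle : x ⟨a, ha⟩ ≤ ∑ j, x j :=
          Finset.single_le_sum (fun _ _ ↦ Nat.zero_le _) (Finset.mem_univ _)
        simp only [ha, hb, dif_pos, dif_neg, not_false_iff]
        omega
      · simpa only [ha, hb, dif_neg, not_false_iff] using Nat.add_lt_add_right hab _
  · funext j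
    simp

/-- Up to a stretch there is only one pair of increasing tuples that differ exactly at `i`. -/
theorem exists_strictMono_comp_succAbove_eq (hx : StrictMono x) (hy : StrictMono y)
    (hxy : ∀ j ≠ i, x j = y j) (hlt : x i < y i) :
    ∃ h : ℕ → ℕ, StrictMono h ∧ h ∘ Fin.val ∘ i.succ.succAbove = x ∧
      h ∘ Fin.val ∘ i.castSucc.succAbove = y := by
  obtain ⟨a, ha, rfl⟩ := exists_strictMono_comp_val_eq hx
  obtain ⟨b, hb, rfl⟩ := exists_strictMono_comp_val_eq hy
  simp only [Function.comp_apply] at hxy hlt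
  refine ⟨fun m ↦ if m ≤ i then a m else b (m - 1), ?_, ?_, ?_⟩
  · refine strictMono_nat_of_lt_succ fun m ↦ ?_
    rcases lt_trichotomy m i with hm | rfl | hm
    · simpa only [hm.le, Nat.succ_le_of_lt hm, if_true] using ha m.lt_succ_self
    · simpa using hlt
    · simpa [hm.not_ge, (hm.trans m.lt_succ_self).not_ge] using hb (by omega : m - 1 < m)
  · funext j
    rcases le_or_gt j i with hj | hj
    · simp [Fin.succAbove_of_castSucc_lt _ _ (Fin.castSucc_lt_succ_iff.2 hj), hj]
    · simp [Fin.succAbove_of_le_castSucc _ _ (Fin.succ_le_castSucc_iff.2 hj), hxy j hj.ne',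
        hj.not_gt]
  · funext j
    rcases lt_or_ge j i with hj | hj
    · simp [Fin.succAbove_of_castSucc_lt _ _ (Fin.castSucc_lt_castSucc_iff.2 hj), hxy j hj.ne,
        hj.le]
    · simp [Fin.succAbove_of_le_castSucc _ _ (Fin.castSucc_le_castSucc_iff.2 hj), hj.not_gt]

namespace StretchInvariant

theorem apply_eq_iff_succAbove (hg : StretchInvariant g) (hx : StrictMono x) (hy : StrictMono y)
    (hxy : ∀ j ≠ i, x j = y j) (hlt : x i < y i) :
    g x = g y ↔
      g (Fin.val ∘ i.succ.succAbove) = g (Fin.val ∘ i.castSucc.succAbove) := by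
  obtain ⟨h, hh, rfl, rfl⟩ := exists_strictMono_comp_succAbove_eq hx hy hxy hlt
  exact hg hh _ _

theorem isInert_of_apply_eq (hg : StretchInvariant g) (hx : StrictMono x) (hy : StrictMono y)
    (hxy : ∀ j ≠ i, x j = y j) (hlt : x i < y i) (heq : g x = g y) : IsInert g i := by
  have hi := (hg.apply_eq_iff_succAbove hx hy hxy hlt).1 heq
  intro v w hv hw hvw
  rcases lt_trichotomy (v i) (w i) with hlt | hvwi | hlt
  · exact (hg.apply_eq_iff_succAbove hv hw hvw hlt).2 hi
  · congr 1
    funext j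
    by_cases hj : j = i
    · exact hj ▸ hvwi
    · exact hvw j hj
  · exact ((hg.apply_eq_iff_succAbove hw hv (fun j hj ↦ (hvw j hj).symm) hlt).2 hi).symm

/-- Doubling all entries makes room to move the value `x i` on its own. -/
theorem isInert_of_forall_isInert (hg : StretchInvariant g) (hx : StrictMono x)
    (hy : StrictMono y) (heq : g x = g y) (hinert : ∀ j, y j = x i → IsInert g j) :
    IsInert g i := by
  let double (m : ℕ) : ℕ := 2 * m
  let shift (m : ℕ) : ℕ := if m = x i then 2 * m + 1 else 2 * m
  have hdouble : StrictMono double := fun a b hab ↦ by simp only [double]; omega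
  have hshift : StrictMono shift := fun a b hab ↦ by simp only [shift]; split_ifs <;> omega
  have hy_eq : g (double ∘ y) = g (shift ∘ y) :=
    apply_eq_of_isInert (hdouble.comp hy) (hshift.comp hy) fun j hj ↦
      hinert j (by_contra fun hne ↦ hj (by simp [double, shift, hne]))
  have hx_eq : g (double ∘ x) = g (shift ∘ x) :=
    calc g (double ∘ x) = g (double ∘ y) := (hg hdouble x y).2 heq
      _ = g (shift ∘ y) := hy_eq
      _ = g (shift ∘ x) := ((hg hshift x y).2 heq).symm
  refine hg.isInert_of_apply_eq (hdouble.comp hx) (hshift.comp hx) (fun j hj ↦ ?_) ?_ hx_eq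
  · simp [double, shift, hx.injective.ne hj]
  · simp [double, shift]

theorem isInert_of_apply_ne (hg : StretchInvariant g) (hx : StrictMono x) (hy : StrictMono y)
    (heq : g x = g y) (hne : x i ≠ y i) : IsInert g i := by
  induction i using WellFoundedLT.induction with
  | ind i ih =>
    wlog hlt : x i < y i generalizing x y
    · exact this hy hx heq.symm (fun j hj hji ↦ ih j hj hji.symm) hne.symm
        (lt_of_le_of_ne (not_lt.1 hlt) hne.symm)
    refine hg.isInert_of_forall_isInert hx hy heq fun j hj ↦ ?_
    have hji : j < i := hy.lt_iff_lt.1 (hj ▸ hlt)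
    exact ih j hji (hj ▸ (hx hji).ne)

theorem apply_eq_iff (hg : StretchInvariant g) (hx : StrictMono x) (hy : StrictMono y) :
    g x = g y ↔ ∀ i, ¬IsInert g i → x i = y i :=
  ⟨fun heq _ hi ↦ by_contra fun hne ↦ hi (hg.isInert_of_apply_ne hx hy heq hne),
    fun h ↦ apply_eq_of_isInert hx hy fun i hne ↦ by_contra fun hi ↦ hne (h i hi)⟩

end StretchInvariant

theorem selUpInjWrt_range_of_stretchInvariant {f : (Fin n → ℕ) → ℕ} {φ : ℕ → ℕ}
    (hφ : StrictMono φ) (hf : StretchInvariant fun x : Fin n → ℕ ↦ f (φ ∘ x)) :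
    SelUpInjWrt n f (Set.range φ) {i | ¬IsInert (fun x : Fin n → ℕ ↦ f (φ ∘ x)) i} := by
  have exists_lift {x : Fin n → ℕ} (hx : ∀ i, x i ∈ Set.range φ) (hx_mono : StrictMono x) :
      ∃ x' : Fin n → ℕ, StrictMono x' ∧ φ ∘ x' = x := by
    choose x' hx' using hx
    obtain rfl : φ ∘ x' = x := funext hx'
    exact ⟨x', fun _ _ hab ↦ hφ.lt_iff_lt.1 (hx_mono hab), rfl⟩
  intro x y hx hy hx_mono hy_mono
  obtain ⟨x, hx_lift, rfl⟩ := exists_lift hx hx_mono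
  obtain ⟨y, hy_lift, rfl⟩ := exists_lift hy hy_mono
  refine (hf.apply_eq_iff hx_lift hy_lift).trans ?_
  simp only [Set.mem_ofPred_eq, Function.comp_apply, hφ.injective.eq_iff]

end StretchInvariance

section Ultrafilter

variable {u : Ultrafilter ℕ} {n : ℕ}

theorem Nonprincipal.infinite_of_mem (hu : Nonprincipal u) {X : Set ℕ} (hX : X ∈ u) :
    X.Infinite :=
  fun hfin ↦ hu X hfin hX

theorem card_image_univ_of_strictMono {α : Type*} [Preorder α] [DecidableEq α]
    {x : Fin n → α} (hx : StrictMono x) : (Finset.univ.image x).card = n := by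
  rw [Finset.card_image_of_injective _ hx.injective, Finset.card_fin]

theorem exists_strictMono_range_subset {α : Type*} [LinearOrder α] [Infinite α]
    {s : Finset α} (hs : s.card ≤ n) :
    ∃ z : Fin n → α, StrictMono z ∧ (s : Set α) ⊆ Set.range z := by
  obtain ⟨t, hst, ht⟩ := Infinite.exists_superset_card_eq s n hs
  exact ⟨t.orderEmbOfFin ht, (t.orderEmbOfFin ht).strictMono,
    (Finset.range_orderEmbOfFin t ht).symm ▸ Finset.coe_subset.2 hst⟩

theorem exists_common_refinement {α : Type*} [LinearOrder α] [Infinite α] {m : ℕ}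
    (x : Fin m → α) (y : Fin n → α) :
    ∃ (z : Fin (m + n) → α) (p : Fin m → Fin (m + n)) (q : Fin n → Fin (m + n)),
      StrictMono z ∧ x = z ∘ p ∧ y = z ∘ q := by
  have hcard : (Finset.univ.image x ∪ Finset.univ.image y).card ≤ m + n :=
    (Finset.card_union_le _ _).trans <| add_le_add
      (Finset.card_image_le.trans_eq (Finset.card_fin m))
      (Finset.card_image_le.trans_eq (Finset.card_fin n))
  obtain ⟨z, hz, hsub⟩ := exists_strictMono_range_subset hcard
  simp only [Finset.coe_union, Finset.coe_image, Finset.coe_univ, Set.image_univ,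
    Set.union_subset_iff, Set.range_subset_range_iff_exists_comp] at hsub
  obtain ⟨⟨p, hp⟩, ⟨q, hq⟩⟩ := hsub
  exact ⟨z, p, q, hz, hp, hq⟩

namespace IsRamseyU

theorem exists_forall_strictMono_eq (hu : IsRamseyU u) (hn : 1 ≤ n) {C : Type*} [Finite C]
    (c : (Fin n → ℕ) → C) :
    ∃ X ∈ u, ∃ a, ∀ x : Fin n → ℕ, (∀ i, x i ∈ X) → StrictMono x → c x = a := by
  let block (a : C) : Set (Finset ℕ) := {s | ∃ hs : s.card = n, c (s.orderEmbOfFin hs) = a}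
  have hpart : IsPartitionOn (cube n) (Set.range block) := by
    refine ⟨by ext s; simp [block, cube], ?_⟩
    rintro _ ⟨a, rfl⟩ _ ⟨b, rfl⟩
    refine or_iff_not_imp_left.2 fun hne ↦ ?_
    obtain ⟨s, ⟨hs, ha⟩, ⟨_, hb⟩⟩ := Set.nonempty_iff_ne_empty.2 hne
    rw [← ha, ← hb]
  obtain ⟨X, hX, _, ⟨a, rfl⟩, hhom⟩ := hu.2 n hn _ hpart (Set.finite_range block)
  refine ⟨X, hX, a, fun x hxX hx ↦ ?_⟩
  obtain ⟨hs, ha⟩ := hhom (Finset.univ.image x) (by simpa [Set.range_subset_iff] using hxX)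
    (card_image_univ_of_strictMono hx)
  rwa [← Finset.orderEmbOfFin_unique hs (fun i ↦ by simp) hx] at ha

theorem exists_forall_stretchInvariant (hu : IsRamseyU u) (hn : 1 ≤ n) {β : Type*}
    (f : (Fin n → ℕ) → β) :
    ∃ X ∈ u, ∀ φ : ℕ → ℕ, StrictMono φ → (∀ m, φ m ∈ X) →
      StretchInvariant fun x : Fin n → ℕ ↦ f (φ ∘ x) := by
  obtain ⟨X, hX, E, hE⟩ := hu.exists_forall_strictMono_eq (n := n + n) (by omega)
    fun z ↦ {pq : (Fin n → Fin (n + n)) × (Fin n → Fin (n + n)) | f (z ∘ pq.1) = f (z ∘ pq.2)}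
  refine ⟨X, hX, fun φ hφ hφX h hh x y ↦ ?_⟩
  obtain ⟨z, p, q, hz, rfl, rfl⟩ := exists_common_refinement x y
  have hstretch := hE (φ ∘ h ∘ z) (fun _ ↦ hφX _) (hφ.comp (hh.comp hz))
  have hplain := hE (φ ∘ z) (fun _ ↦ hφX _) (hφ.comp hz)
  exact Set.ext_iff.1 (hstretch.trans hplain.symm) (p, q)

theorem exists_selUpInjWrt (hu : IsRamseyU u) (hn : 1 ≤ n) (f : (Fin n → ℕ) → ℕ) :
    ∃ X ∈ u, ∃ I : Set (Fin n), SelUpInjWrt n f X I := by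
  obtain ⟨X, hX, hf⟩ := hu.exists_forall_stretchInvariant hn f
  have hinf : X.Infinite := hu.1.infinite_of_mem hX
  have hφ : StrictMono (Nat.nth (· ∈ X)) := Nat.nth_strictMono hinf
  have hrange : Set.range (Nat.nth (· ∈ X)) = X := Nat.range_nth_of_infinite hinf
  have hsel := selUpInjWrt_range_of_stretchInvariant hφ (hf _ hφ (Nat.nth_mem_of_infinite hinf))
  exact ⟨X, hX, _, hrange ▸ hsel⟩

end IsRamseyU

theorem SelUpInjWrt.infinite_image {f : (Fin n → ℕ) → ℕ} {X : Set ℕ} {I : Set (Fin n)}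
    (hf : SelUpInjWrt n f X I) (hX : X.Infinite) (hI : I.Nonempty) :
    (f '' {x | StrictMono x}).Infinite := by
  obtain ⟨i, hi⟩ := hI
  have hφ : StrictMono (Nat.nth (· ∈ X)) := Nat.nth_strictMono hX
  let x (k : ℕ) (j : Fin n) : ℕ := Nat.nth (· ∈ X) (k + j)
  have hx_mono (k : ℕ) : StrictMono (x k) := fun _ _ hab ↦ hφ (Nat.add_lt_add_left hab k)
  have hx_mem (k : ℕ) (j : Fin n) : x k j ∈ X := Nat.nth_mem_of_infinite hX _
  have hinj : Function.Injective fun k ↦ f (x k) := fun k l hkl ↦ by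
    have hxi : x k i = x l i :=
      (hf _ _ (hx_mem k) (hx_mem l) (hx_mono k) (hx_mono l)).1 hkl i hi
    exact Nat.add_right_cancel (hφ.injective hxi)
  exact Set.infinite_of_injective_forall_mem hinj fun k ↦ Set.mem_image_of_mem f (hx_mono k)

theorem homog_of_forall_block_eq {P : Set (Set (Finset ℕ))} {F : Finset ℕ → Set (Finset ℕ)}
    (hF : ∀ s : Finset ℕ, s.card = n → F s ∈ P ∧ s ∈ F s) {X : Set ℕ} (hX : X.Infinite)
    (hconst : ∀ s t : Finset ℕ, ↑s ⊆ X → ↑t ⊆ X → s.card = n → t.card = n → F s = F t) :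
    Homog n P X := by
  obtain ⟨t, htX, ht⟩ := hX.exists_subset_card_eq n
  exact ⟨F t, (hF t ht).1, fun s hsX hs ↦ hconst s t hsX htX hs ht ▸ (hF s hs).2⟩

theorem isRamseyU_of_forall_selUpInjWrt (hu : Nonprincipal u)
    (hsel : ∀ n : ℕ, 1 ≤ n → ∀ f : (Fin n → ℕ) → ℕ, ∃ X ∈ u,
      (∃ I : Set (Fin n), I.Nonempty ∧ SelUpInjWrt n f X I) ∨ SelUpInjWrt n f X ∅) :
    IsRamseyU u := by
  refine ⟨hu, fun n hn P hP hfin ↦ ?_⟩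
  have exists_block (s : Finset ℕ) (hs : s.card = n) : ∃ A, A ∈ P ∧ s ∈ A :=
    Set.mem_sUnion.1 (hP.1.symm ▸ hs)
  choose! F hF using exists_block
  obtain ⟨e, he⟩ := Set.countable_iff_exists_injOn.1 hfin.countable
  obtain ⟨X, hX, ⟨I, hI, hf⟩ | hf⟩ := hsel n hn fun x ↦ e (F (Finset.univ.image x))
  · refine absurd ((hfin.image e).subset ?_) (hf.infinite_image (hu.infinite_of_mem hX) hI)
    rintro _ ⟨x, hx, rfl⟩
    exact Set.mem_image_of_mem e (hF _ (card_image_univ_of_strictMono hx)).1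
  · refine ⟨X, hX, homog_of_forall_block_eq hF (hu.infinite_of_mem hX) fun s t hsX htX hs ht ↦ ?_⟩
    have hcode : e (F s) = e (F t) := by
      simpa using hf (s.orderEmbOfFin hs) (t.orderEmbOfFin ht)
        (fun i ↦ hsX (s.orderEmbOfFin_mem hs i)) (fun i ↦ htX (t.orderEmbOfFin_mem ht i))
        (s.orderEmbOfFin hs).strictMono (t.orderEmbOfFin ht).strictMono
    exact he (hF s hs).1 (hF t ht).1 hcode

end Ultrafilter

/-- a nonprincipal ultrafilter `u` on `ℕ` is Ramsey iff for every `n ≥ 1`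
and every `f : ℕ^n → ℕ`, `u` contains a set `X` on which `f` is either selectively upward
injective (w.r.t. some nonempty index set) or upward constant. -/
theorem stmt_17 (u : Ultrafilter ℕ) (hu : Nonprincipal u) :
    IsRamseyU u ↔
      ∀ n : ℕ, 1 ≤ n → ∀ f : (Fin n → ℕ) → ℕ, ∃ X ∈ u,
        (∃ I : Set (Fin n), I.Nonempty ∧ SelUpInjWrt n f X I) ∨
        SelUpInjWrt n f X ∅ := by
  refine ⟨fun hR n hn f ↦ ?_, isRamseyU_of_forall_selUpInjWrt hu⟩
  obtain ⟨X, hX, I, hI⟩ := hR.exists_selUpInjWrt hn f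
  refine ⟨X, hX, ?_⟩
  rcases I.eq_empty_or_nonempty with rfl | hne
  · exact Or.inr hI
  · exact Or.inl ⟨I, hne, hI⟩
end

section
/- Let u be a nonprincipal ultrafilter on ℕ, let n, m, k be natural numbers, let f : ℕ^n → ℕ and g : ℕ^m → ℕ, let p be an n-element subset of {0,…,k−1} and q an m-element subset of {0,…,k−1}, and suppose there is a set X ∈ u such that f(x_{p_[0]}, x_{p_[1]}, …, x_{p_[n−1]}) = g(x_{q_[0]}, x_{q_[1]}, …, x_{q_[m−1]}) for all x_0 < x_1 < … < x_{k−1} from X. Then the diagonal ultrafilter extensions agree: f̃(u, u, …, u) = g̃(u, u, …, u) (n arguments and m arguments respectively). -/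
/-! If `u ≤ atTop`, then almost every point of the Fubini power `u^k` is a strictly increasing
tuple, and it lies in any prescribed `X ∈ u`. For increasing `σ : Fin n → Fin k` the restriction
`y ↦ y ∘ σ` pushes `u^k` to `u^n`: if `σ` misses the coordinate `0`, that coordinate is integrated
out, and otherwise `σ` fixes `0` and acts on the remaining ones. Hence `f̃(u, …, u)` and
`g̃(u, …, u)` are the images of the same ultrafilter `u^k` under two functions that agree almost
everywhere. -/

section TensorPow

variable {u : Ultrafilter ℕ}

theorem eventually_tensorPow_succ {n : ℕ} {P : (Fin (n + 1) → ℕ) → Prop} :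
    (∀ᶠ y in tensorPow u (n + 1), P y) ↔ ∀ᶠ a in u, ∀ᶠ y in tensorPow u n, P (Fin.cons a y) :=
  Iff.rfl

theorem eventually_tensorPow_forall_mem {X : Set ℕ} (hX : X ∈ u) (n : ℕ) :
    ∀ᶠ y : Fin n → ℕ in tensorPow u n, ∀ i, y i ∈ X := by
  induction n with
  | zero => exact .of_forall fun _ i => i.elim0
  | succ n ih =>
    rw [eventually_tensorPow_succ]
    filter_upwards [hX] with a ha
    filter_upwards [ih] with y hy
    exact Fin.cases ha hy

theorem eventually_tensorPow_strictMono (hu : (u : Filter ℕ) ≤ Filter.atTop) (n : ℕ) :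
    ∀ᶠ y : Fin n → ℕ in tensorPow u n, StrictMono y := by
  induction n with
  | zero => exact .of_forall fun _ i => i.elim0
  | succ n ih =>
    refine eventually_tensorPow_succ.2 (.of_forall fun a => ?_)
    filter_upwards [ih, eventually_tensorPow_forall_mem (hu (Filter.Ioi_mem_atTop a)) n]
      with y hy hay
    exact Fin.strictMono_cons.2 ⟨hay, hy⟩

theorem map_tail_tensorPow_succ (u : Ultrafilter ℕ) (n : ℕ) :
    (tensorPow u (n + 1)).map Fin.tail = tensorPow u n := by
  ext S
  change (∀ᶠ y : Fin (n + 1) → ℕ in tensorPow u (n + 1), Fin.tail y ∈ S) ↔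
    ∀ᶠ y in tensorPow u n, y ∈ S
  simp only [eventually_tensorPow_succ, Fin.tail_cons, Filter.eventually_const]

theorem map_cons_tail_tensorPow_succ {n k : ℕ} {h : (Fin k → ℕ) → Fin n → ℕ}
    (hh : (tensorPow u k).map h = tensorPow u n) :
    (tensorPow u (k + 1)).map (fun y => Fin.cons (y 0) (h (Fin.tail y))) =
      tensorPow u (n + 1) := by
  ext S
  change (∀ᶠ y : Fin (k + 1) → ℕ in tensorPow u (k + 1),
    (Fin.cons (y 0) (h (Fin.tail y)) : Fin (n + 1) → ℕ) ∈ S) ↔ ∀ᶠ z in tensorPow u (n + 1), z ∈ S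
  simp only [eventually_tensorPow_succ, Fin.cons_zero, Fin.tail_cons, ← hh,
    Ultrafilter.coe_map, Filter.eventually_map]

theorem exists_strictMono_eq_succ_comp {n k : ℕ} {σ : Fin n → Fin (k + 1)} (hσ : StrictMono σ)
    (hσ₀ : ∀ i, σ i ≠ 0) : ∃ τ : Fin n → Fin k, StrictMono τ ∧ σ = Fin.succ ∘ τ :=
  ⟨fun i => (σ i).pred (hσ₀ i), Fin.strictMono_pred_comp hσ₀ hσ, by ext; simp⟩

theorem map_comp_tensorPow (u : Ultrafilter ℕ) {n k : ℕ} {σ : Fin n → Fin k}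
    (hσ : StrictMono σ) : (tensorPow u k).map (· ∘ σ) = tensorPow u n := by
  induction k generalizing n with
  | zero =>
    obtain rfl : n = 0 := by simpa using Fintype.card_le_of_injective σ hσ.injective
    convert Ultrafilter.map_id (tensorPow u 0)
  | succ k ih =>
    by_cases hσ₀ : ∀ i, σ i ≠ 0
    · obtain ⟨τ, hτ, rfl⟩ := exists_strictMono_eq_succ_comp hσ hσ₀
      calc (tensorPow u (k + 1)).map (· ∘ Fin.succ ∘ τ)
          = ((tensorPow u (k + 1)).map Fin.tail).map (· ∘ τ) := by rw [Ultrafilter.map_map]; rfl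
        _ = tensorPow u n := by rw [map_tail_tensorPow_succ, ih hτ]
    · push Not at hσ₀
      obtain ⟨i, hi⟩ := hσ₀
      obtain ⟨n, rfl⟩ := Nat.exists_eq_succ_of_ne_zero i.pos.ne'
      have hσ_zero : σ 0 = 0 := le_antisymm (hi ▸ hσ.monotone (Fin.zero_le i)) (Fin.zero_le _)
      have hσ_succ (j : Fin n) : σ j.succ ≠ 0 := (hσ_zero ▸ hσ j.succ_pos).ne'
      obtain ⟨τ, hτ, hστ⟩ :=
        exists_strictMono_eq_succ_comp (hσ.comp Fin.strictMono_succ) hσ_succ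
      have hcons (y : Fin (k + 1) → ℕ) : y ∘ σ = Fin.cons (y 0) (Fin.tail y ∘ τ) := by
        funext j
        cases j using Fin.cases with
        | zero => simp [hσ_zero]
        | succ j => exact congrArg y (congrFun hστ j)
      simpa only [hcons] using map_cons_tail_tensorPow_succ (ih hτ)

theorem diagExt_eq_of_eventually_eq {n m k : ℕ} {f : (Fin n → ℕ) → ℕ} {g : (Fin m → ℕ) → ℕ}
    {σ : Fin n → Fin k} {τ : Fin m → Fin k} (hσ : StrictMono σ) (hτ : StrictMono τ)
    (hfg : ∀ᶠ y : Fin k → ℕ in tensorPow u k, f (y ∘ σ) = g (y ∘ τ)) :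
    diagExt f u = diagExt g u := by
  rw [diagExt, diagExt, ← map_comp_tensorPow u hσ, ← map_comp_tensorPow u hτ,
    Ultrafilter.map_map, Ultrafilter.map_map]
  exact Ultrafilter.coe_injective (Filter.map_congr hfg)

end TensorPow

theorem Nonprincipal.le_atTop {u : Ultrafilter ℕ} (hu : Nonprincipal u) :
    (u : Filter ℕ) ≤ Filter.atTop := by
  rw [← Nat.cofinite_eq_atTop]
  exact fun S hS => Ultrafilter.compl_notMem_iff.1 (hu Sᶜ hS)

theorem exists_strictMono_val_eq_nth {s : Finset ℕ} {n k : ℕ} (hs : s ⊆ Finset.range k)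
    (hn : s.card = n) : ∃ σ : Fin n → Fin k, StrictMono σ ∧ ∀ i, (σ i : ℕ) = nth s i := by
  refine ⟨fun i => ⟨s.orderEmbOfFin hn i, ?_⟩, (s.orderEmbOfFin hn).strictMono, fun i => ?_⟩
  · exact Finset.mem_range.1 (hs (s.orderEmbOfFin_mem hn i))
  · simp [nth, Finset.orderEmbOfFin_apply, hn]

theorem strictMonoOn_Iio_of_comp_val {α : Type*} [Preorder α] {k : ℕ} {x : ℕ → α}
    (hx : StrictMono fun i : Fin k => x i) : StrictMonoOn x (Set.Iio k) :=
  fun i hi j hj hij => hx (show (⟨i, hi⟩ : Fin k) < ⟨j, hj⟩ from hij)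

/-- if `f(x_{p_[0]}, …, x_{p_[n-1]}) = g(x_{q_[0]}, …, x_{q_[m-1]})` for all
increasing `k`-tuples `x_0 < … < x_{k-1}` from some set `X ∈ u`, then the diagonal
ultrafilter extensions agree: `f̃(u, …, u) = g̃(u, …, u)`. -/
theorem stmt_18 (u : Ultrafilter ℕ) (hu : Nonprincipal u) (n m k : ℕ)
    (f : (Fin n → ℕ) → ℕ) (g : (Fin m → ℕ) → ℕ)
    (p q : Finset ℕ) (hp : p ⊆ Finset.range k) (hpc : p.card = n)
    (hq : q ⊆ Finset.range k) (hqc : q.card = m)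
    (X : Set ℕ) (hXu : X ∈ u)
    (hfg : ∀ x : ℕ → ℕ, (∀ i < k, x i ∈ X) → StrictMonoOn x (Set.Iio k) →
      f (fun i => x (nth p i)) = g (fun j => x (nth q j))) :
    diagExt f u = diagExt g u := by
  obtain ⟨σ, hσ, hσp⟩ := exists_strictMono_val_eq_nth hp hpc
  obtain ⟨τ, hτ, hτq⟩ := exists_strictMono_val_eq_nth hq hqc
  refine diagExt_eq_of_eventually_eq hσ hτ ?_
  filter_upwards [eventually_tensorPow_forall_mem hXu k,
    eventually_tensorPow_strictMono hu.le_atTop k] with y hyX hy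
  obtain ⟨x, rfl⟩ : ∃ x : ℕ → ℕ, (fun i : Fin k => x i) = y :=
    ⟨Function.extend Fin.val y 0, Function.extend_comp Fin.val_injective y 0⟩
  simpa only [Function.comp_def, hσp, hτq] using
    hfg x (fun i hi => hyX ⟨i, hi⟩) (strictMonoOn_Iio_of_comp_val hy)
end
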